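/- For any α > 0 there exists a constant c = c(α) ≥ 1 such that for all a, b ∈ ℝ^N, N ∈ ℕ, one has (1/c)|b^⟨α⟩ − a^⟨α⟩| ≤ (|a| + |b|)^{α−1}|b − a| ≤ c |b^⟨α⟩ − a^⟨α⟩|. -/

import Mathlib

open MeasureTheory Set
open scoped ENNReal

noncomputable section

abbrev Vec (N : ℕ) := EuclideanSpace ℝ (Fin N)

/-- The power `w^⟨α⟩ := |w|^{α−1} w` of a vector (interpreted as `0` when `w = 0`). -/
def pw {N : ℕ} (α : ℝ) (w : Vec N) : Vec N := ‖w‖ ^ (α - 1) • w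

lemma scal_aux (β x y : ℝ) (hx : 0 < x) (hxy : x ≤ y) (hy : y ≤ 2 * x) :
    y ^ β ≤ 2 ^ |β| * x ^ β ∧ x ^ β ≤ 2 ^ |β| * y ^ β := by
  have hy0 : 0 < y := lt_of_lt_of_le hx hxy
  have h1 : (1:ℝ) ≤ 2 ^ |β| := Real.one_le_rpow (by norm_num) (abs_nonneg _)
  have hxp := Real.rpow_pos_of_pos hx β
  have hyp := Real.rpow_pos_of_pos hy0 β
  rcases le_total 0 β with hb | hb
  · have e1 : x ^ β ≤ y ^ β := Real.rpow_le_rpow hx.le hxy hb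
    have e2 : y ^ β ≤ (2 * x) ^ β := Real.rpow_le_rpow hy0.le hy hb
    rw [Real.mul_rpow (by norm_num) hx.le] at e2
    rw [abs_of_nonneg hb] at *
    exact ⟨e2, by nlinarith⟩
  · have e1 : y ^ β ≤ x ^ β := Real.rpow_le_rpow_of_nonpos hx hxy hb
    have e2 : (2 * x) ^ β ≤ y ^ β := Real.rpow_le_rpow_of_nonpos hy0 hy hb
    rw [Real.mul_rpow (by norm_num) hx.le] at e2
    rw [abs_of_nonpos hb] at *
    refine ⟨by nlinarith, ?_⟩
    have e3 : (2:ℝ) ^ (-β) * 2 ^ β = 1 := by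
      rw [← Real.rpow_add (by norm_num)]; simp
    calc x ^ β = 2 ^ (-β) * (2 ^ β * x ^ β) := by rw [← mul_assoc, e3, one_mul]
      _ ≤ _ := by gcongr

lemma real_aux (α : ℝ) (hα : 0 < α) (s t : ℝ) (hs : 0 ≤ s) (hst : s ≤ t) (ht : 0 < t) :
    |t ^ (α - 1) - s ^ (α - 1)| * s ≤ (2 + α) * t ^ (α - 1) * (t - s) := by
  have htp := Real.rpow_pos_of_pos ht (α - 1)
  rcases hs.eq_or_lt with h0 | hs0
  · subst h0
    simp only [mul_zero, sub_zero]; positivity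
  obtain ⟨r, rfl⟩ : ∃ r, s = r * t := ⟨s / t, by field_simp⟩
  have hr0 : 0 < r := pos_of_mul_pos_left hs0 ht.le
  have hr1 : r ≤ 1 := by
    by_contra h; push Not at h; nlinarith
  have hra : r ^ (α - 1) * r = r ^ α := by
    rw [← Real.rpow_add_one hr0.ne']; simp
  have k1 : r ^ α ≤ 1 := Real.rpow_le_one hr0.le hr1 hα.le
  have k2 : 1 - r ^ α ≤ (1 + α) * (1 - r) := by
    rcases le_total 1 α with h | h
    · have := one_add_mul_self_le_rpow_one_add (s := r - 1) (by linarith) h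
      rw [show 1 + (r - 1) = r by ring] at this
      nlinarith
    · have : r ^ (1:ℝ) ≤ r ^ α := Real.rpow_le_rpow_of_exponent_ge hr0 hr1 h
      rw [Real.rpow_one] at this
      nlinarith
  have key : |1 - r ^ (α - 1)| * r ≤ (2 + α) * (1 - r) := by
    rw [← abs_of_pos hr0, ← abs_mul, abs_of_pos hr0, sub_mul, hra, abs_le]
    constructor <;> nlinarith
  rw [Real.mul_rpow hr0.le ht.le]
  have : t ^ (α - 1) - r ^ (α - 1) * t ^ (α - 1) = t ^ (α - 1) * (1 - r ^ (α - 1)) := by ring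
  rw [this, abs_mul, abs_of_pos htp]
  calc _ = t ^ (α - 1) * t * (|1 - r ^ (α - 1)| * r) := by ring
    _ ≤ t ^ (α - 1) * t * ((2 + α) * (1 - r)) := by gcongr
    _ = _ := by ring

lemma upper_aux (α : ℝ) (hα : 0 < α) {N : ℕ} (a b : Vec N) (hab : ‖a‖ ≤ ‖b‖) (hb : 0 < ‖b‖) :
    ‖pw α b - pw α a‖ ≤ (3 + α) * ‖b‖ ^ (α - 1) * ‖b - a‖ := by
  have hp := Real.rpow_pos_of_pos hb (α - 1)
  have e : pw α b - pw α a
      = ‖b‖ ^ (α - 1) • (b - a) + (‖b‖ ^ (α - 1) - ‖a‖ ^ (α - 1)) • a := by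
    unfold pw; module
  have h1 := real_aux α hα ‖a‖ ‖b‖ (norm_nonneg _) hab hb
  have h2 : ‖b‖ - ‖a‖ ≤ ‖b - a‖ := norm_sub_norm_le b a
  have h3 : (2 + α) * ‖b‖ ^ (α - 1) * (‖b‖ - ‖a‖) ≤ (2 + α) * ‖b‖ ^ (α - 1) * ‖b - a‖ := by
    gcongr
  rw [e]
  refine (norm_add_le _ _).trans ?_
  rw [norm_smul, norm_smul, Real.norm_eq_abs, Real.norm_eq_abs, abs_of_pos hp]
  linarith

lemma norm_pw (α : ℝ) (hα : 0 < α) {N : ℕ} (a : Vec N) : ‖pw α a‖ = ‖a‖ ^ α := by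
  unfold pw
  rw [norm_smul, Real.norm_eq_abs, abs_of_nonneg (by positivity)]
  rcases (norm_nonneg a).eq_or_lt with h | h
  · rw [← h, Real.zero_rpow hα.ne', mul_zero]
  · rw [← Real.rpow_add_one h.ne']; simp

lemma pw_pw (α : ℝ) (hα : 0 < α) {N : ℕ} (a : Vec N) : pw (1 / α) (pw α a) = a := by
  rw [pw, norm_pw α hα, pw, smul_smul]
  rcases (norm_nonneg a).eq_or_lt with h | h
  · rw [norm_eq_zero.1 h.symm, smul_zero]
  · rw [← Real.rpow_mul h.le, ← Real.rpow_add h,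
      show α * (1 / α - 1) + (α - 1) = 0 by field_simp; ring, Real.rpow_zero, one_smul]

lemma lower_aux (α : ℝ) (hα : 0 < α) {N : ℕ} (a b : Vec N) (hab : ‖a‖ ≤ ‖b‖) (hb : 0 < ‖b‖) :
    ‖b‖ ^ (α - 1) * ‖b - a‖ ≤ (3 + 1 / α) * ‖pw α b - pw α a‖ := by
  have h := upper_aux (1 / α) (by positivity) (pw α a) (pw α b)
    (by rw [norm_pw α hα, norm_pw α hα]; gcongr) (by rw [norm_pw α hα]; positivity)
  rw [pw_pw α hα, pw_pw α hα, norm_pw α hα, ← Real.rpow_mul hb.le] at h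
  have e : ‖b‖ ^ (α - 1) * ‖b‖ ^ (α * (1 / α - 1)) = 1 := by
    rw [← Real.rpow_add hb, show α - 1 + α * (1 / α - 1) = 0 by field_simp; ring, Real.rpow_zero]
  calc _ ≤ ‖b‖ ^ (α - 1) * ((3 + 1 / α) * ‖b‖ ^ (α * (1 / α - 1)) * ‖pw α b - pw α a‖) := by
        gcongr
    _ = (‖b‖ ^ (α - 1) * ‖b‖ ^ (α * (1 / α - 1))) * ((3 + 1 / α) * ‖pw α b - pw α a‖) := by ring
    _ = _ := by rw [e, one_mul]

lemma main_aux (α : ℝ) (hα : 0 < α) {N : ℕ} (a b : Vec N) (hab : ‖a‖ ≤ ‖b‖) :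
    ‖pw α b - pw α a‖ ≤
      ((3 + α + 1 / α) * 2 ^ |α - 1|) * ((‖a‖ + ‖b‖) ^ (α - 1) * ‖b - a‖) ∧
    (‖a‖ + ‖b‖) ^ (α - 1) * ‖b - a‖ ≤
      ((3 + α + 1 / α) * 2 ^ |α - 1|) * ‖pw α b - pw α a‖ := by
  rcases (norm_nonneg b).eq_or_lt with hb | hb
  · have ha : ‖a‖ = 0 := le_antisymm (hab.trans hb.symm.le) (norm_nonneg a)
    rw [norm_eq_zero.1 ha, norm_eq_zero.1 hb.symm]
    simp
  have hu := upper_aux α hα a b hab hb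
  have hl := lower_aux α hα a b hab hb
  obtain ⟨s1, s2⟩ := scal_aux (α - 1) ‖b‖ (‖a‖ + ‖b‖) hb (by linarith [norm_nonneg a]) (by linarith)
  have hi : 0 < 1 / α := by positivity
  have q1 : 3 + α ≤ 3 + α + 1 / α := by linarith
  have q2 : 3 + 1 / α ≤ 3 + α + 1 / α := by linarith
  constructor
  · calc _ ≤ (3 + α) * ‖b‖ ^ (α - 1) * ‖b - a‖ := hu
      _ ≤ (3 + α + 1 / α) * (2 ^ |α - 1| * (‖a‖ + ‖b‖) ^ (α - 1)) * ‖b - a‖ := by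
        exact mul_le_mul_of_nonneg_right (mul_le_mul q1 s2 (by positivity) (by positivity))
          (norm_nonneg _)
      _ = _ := by ring
  · calc _ ≤ (2 ^ |α - 1| * ‖b‖ ^ (α - 1)) * ‖b - a‖ := by gcongr
      _ = 2 ^ |α - 1| * (‖b‖ ^ (α - 1) * ‖b - a‖) := by ring
      _ ≤ 2 ^ |α - 1| * ((3 + 1 / α) * ‖pw α b - pw α a‖) := by gcongr
      _ ≤ 2 ^ |α - 1| * ((3 + α + 1 / α) * ‖pw α b - pw α a‖) := by
        exact mul_le_mul_of_nonneg_left (mul_le_mul_of_nonneg_right q2 (norm_nonneg _))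
          (by positivity)
      _ = _ := by ring

/-- For any `α > 0` there exists `c = c(α) ≥ 1` such that for all `a, b ∈ ℝ^N`, `N ∈ ℕ`:
`(1/c)|b^⟨α⟩ − a^⟨α⟩| ≤ (|a| + |b|)^{α−1}|b − a| ≤ c|b^⟨α⟩ − a^⟨α⟩|`. -/
theorem pow_diff_equiv (α : ℝ) (hα : 0 < α) :
    ∃ c : ℝ, 1 ≤ c ∧ ∀ (N : ℕ) (a b : Vec N),
      (1 / c) * ‖pw α b - pw α a‖ ≤ (‖a‖ + ‖b‖) ^ (α - 1) * ‖b - a‖ ∧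
      (‖a‖ + ‖b‖) ^ (α - 1) * ‖b - a‖ ≤ c * ‖pw α b - pw α a‖ := by
  have hi : 0 < 1 / α := by positivity
  have h1 : (1:ℝ) ≤ 2 ^ |α - 1| := Real.one_le_rpow (by norm_num) (abs_nonneg _)
  have hc : 1 ≤ (3 + α + 1 / α) * 2 ^ |α - 1| := by nlinarith
  refine ⟨(3 + α + 1 / α) * 2 ^ |α - 1|, hc, fun N a b => ?_⟩
  have hc0 : 0 < (3 + α + 1 / α) * (2:ℝ) ^ |α - 1| := by linarith
  rw [one_div_mul_eq_div, div_le_iff₀' hc0]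
  rcases le_total ‖a‖ ‖b‖ with h | h
  · exact main_aux α hα a b h
  · have := main_aux α hα b a h
    rwa [norm_sub_rev (pw α b), norm_sub_rev b, add_comm ‖a‖]
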